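/- (Proposition 1) Let φ : ℝ → ℝ be a function that is nondecreasing on (0, ∞) and such that n ↦ n·φ(n) is convex on (0, ∞). Suppose φ is differentiable at some point n₀ > 0 with φ'(n₀) = 0. Then φ(n) = φ(n₀) for every n with 0 < n ≤ n₀; that is, φ is constant on the interval (0, n₀]. -/

import Mathlib

open Set

/-!
Since `φ'(n₀) = 0`, the function `n ↦ n * φ n` has slope `φ n₀` at `n₀`, so its tangent there is
the line `n ↦ n * φ n₀` through the origin. A convex function lies above its tangents, and dividing
by `n > 0` shows that `n₀` minimizes `φ`; a nondecreasing function is constant to the left of a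
minimizer.
-/

section

variable {S : Set ℝ} {f : ℝ → ℝ} {x : ℝ}

lemma add_mul_sub_le_of_convexOn_of_hasDerivWithinAt {f' y : ℝ} (hf : ConvexOn ℝ S f)
    (hx : x ∈ S) (hy : y ∈ S) (hf' : HasDerivWithinAt f f' S x) :
    f x + f' * (y - x) ≤ f y := by
  rcases lt_trichotomy x y with hxy | rfl | hyx
  · have hslope : f' ≤ slope f x y := hf.le_slope_of_hasDerivWithinAt hx hy hxy hf'
    rw [slope_def_field, le_div_iff₀ (sub_pos.2 hxy)] at hslope
    linarith
  · simp
  · have hslope : slope f y x ≤ f' := hf.slope_le_of_hasDerivWithinAt hy hx hyx hf'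
    rw [slope_def_field, div_le_iff₀ (sub_pos.2 hyx)] at hslope
    linarith

lemma isMinOn_of_convexOn_id_mul_of_hasDerivWithinAt_zero
    (hf : ConvexOn ℝ S fun y => y * f y) (hx : x ∈ S) (hf' : HasDerivWithinAt f 0 S x) :
    IsMinOn f (S ∩ Ioi 0) x := by
  rintro y ⟨hyS, hy⟩
  have hderiv : HasDerivWithinAt (fun y => y * f y) (f x) S x := by
    simpa using (hasDerivAt_id' x).hasDerivWithinAt.fun_mul hf'
  refine le_of_mul_le_mul_left ?_ (mem_Ioi.1 hy)
  calc y * f x = x * f x + f x * (y - x) := by ring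
    _ ≤ y * f y := add_mul_sub_le_of_convexOn_of_hasDerivWithinAt hf hx hyS hderiv

end

theorem prop1_constant_on_Ioc_general {S : Set ℝ} {φ : ℝ → ℝ} {n₀ : ℝ} (hmono : MonotoneOn φ S)
    (hconv : ConvexOn ℝ S fun n => n * φ n) (hn₀ : n₀ ∈ S)
    (hderiv : HasDerivWithinAt φ 0 S n₀) :
    ∀ n ∈ S, 0 < n → n ≤ n₀ → φ n = φ n₀ := by
  intro n hnS hn hle
  have hmin : IsMinOn φ (S ∩ Ioi 0) n₀ :=
    isMinOn_of_convexOn_id_mul_of_hasDerivWithinAt_zero hconv hn₀ hderiv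
  exact le_antisymm (hmono hnS hn₀ hle) (hmin ⟨hnS, hn⟩)

/-- Proposition 1: if `φ` is nondecreasing on `(0,∞)`, `n ↦ n·φ(n)` is convex on `(0,∞)`, and
`φ` is differentiable at some `n₀ > 0` with `φ'(n₀) = 0`, then `φ` is constant (equal to
`φ(n₀)`) on the interval `(0, n₀]`. -/
theorem prop1_constant_on_Ioc
    (φ : ℝ → ℝ) (hmono : MonotoneOn φ (Set.Ioi (0 : ℝ)))
    (hconv : ConvexOn ℝ (Set.Ioi (0 : ℝ)) (fun n => n * φ n))
    (n₀ : ℝ) (hn₀ : 0 < n₀) (hderiv : HasDerivAt φ 0 n₀) :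
    ∀ n, 0 < n → n ≤ n₀ → φ n = φ n₀ := fun n hn =>
  prop1_constant_on_Ioc_general hmono hconv hn₀ hderiv.hasDerivWithinAt n hn hn
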